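/- arXiv:2305.12553 — 2 statements merged into one kernel-verified Lean document; each statement's English description precedes it below -/
import Mathlib

section
/- (Theorem 2: Nash-regret bound for sequential maximum improvement smoothed best response in Markov α-potential games.) Consider a finite Markov game that is a Markov α-potential game with α-potential function Φ. Write Ā = max_{i∈I}|A_i| and C = max_{i,s,a}|u_i(s,a)|, and assume Ā ≥ 2, C ≥ 1, and 8·C·√Ā/(√μ̄·(1−δ)²) ≥ 1, where μ is an initial distribution with μ̄ = min_{s∈S} μ(s) > 0. Let C_Φ > 0 satisfy |Φ(μ,π) − Φ(μ,π')| ≤ C_Φ for all profiles π, π', and set C' = C_Φ + 2·|I|·log(Ā)/(1−δ). Then for every T ≥ 1 there exists τ ∈ (0,1) such that the sequential maximum improvement smoothed best response iterates π^{(0)},…,π^{(T)} with parameter τ satisfy Nash-regret(T) ≤ (16√2·C·√Ā·log Ā)/(√μ̄·(1−δ)^{5/2}) · ( (α + C'/T)^{1/2} + (α + C'/T)^{1/4}·(1 + (|I|/T)^{1/4}) + (|I|/T)^{1/2} ). -/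
open Finset

section MarkovGameDefs

variable {S : Type*} {I : Type*} {A : I → Type*}

/-- A probability vector on a finite set. -/
def IsProbVec {α : Type*} [Fintype α] (p : α → ℝ) : Prop :=
  (∀ a, 0 ≤ p a) ∧ ∑ a, p a = 1

/-- A stationary policy profile: each player's policy gives a probability vector at each state. -/
def IsPolicy [Fintype I] [∀ i, Fintype (A i)] (π : ∀ i, S → A i → ℝ) : Prop :=
  ∀ i s, IsProbVec (π i s)

/-- A transition kernel. -/
def IsKernel [Fintype S] (P : S → (∀ i, A i) → S → ℝ) : Prop :=
  ∀ s a, IsProbVec (fun s' => P s a s')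

/-- Product distribution on joint actions induced by a profile. -/
noncomputable def jointDist [Fintype I] (π : ∀ i, S → A i → ℝ) (s : S) (a : ∀ i, A i) : ℝ :=
  ∏ i, π i s (a i)

/-- Induced transition matrix `P^π`. -/
noncomputable def transMat [Fintype S] [Fintype I] [DecidableEq I] [∀ i, Fintype (A i)]
    (P : S → (∀ i, A i) → S → ℝ) (π : ∀ i, S → A i → ℝ) (s s' : S) : ℝ :=
  ∑ a : ∀ j, A j, jointDist π s a * P s a s'

/-- Expected one-stage payoff `u(s,π)`. -/
noncomputable def expPay [Fintype I] [DecidableEq I] [∀ i, Fintype (A i)]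
    (u : S → (∀ i, A i) → ℝ) (π : ∀ i, S → A i → ℝ) (s : S) : ℝ :=
  ∑ a : ∀ j, A j, jointDist π s a * u s a

/-- `V` solves the Bellman equation for payoff `u`, kernel `P`, discount `δ`, profile `π`. -/
def IsValueFun [Fintype S] [Fintype I] [DecidableEq I] [∀ i, Fintype (A i)]
    (δ : ℝ) (P : S → (∀ i, A i) → S → ℝ) (u : S → (∀ i, A i) → ℝ)
    (π : ∀ i, S → A i → ℝ) (V : S → ℝ) : Prop :=
  ∀ s, V s = expPay u π s + δ * ∑ s', transMat P π s s' * V s'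

/-- Player `i`'s Q-function, given a value function `V` for player `i` under `π`. -/
noncomputable def Qfun [Fintype S] [Fintype I] [DecidableEq I] [∀ i, Fintype (A i)]
    [∀ i, DecidableEq (A i)]
    (δ : ℝ) (P : S → (∀ i, A i) → S → ℝ) (u : S → (∀ i, A i) → ℝ)
    (π : ∀ i, S → A i → ℝ) (V : S → ℝ) (i : I) (s : S) (ai : A i) : ℝ :=
  ∑ a : ∀ j, A j,
    if a i = ai then
      (∏ j ∈ Finset.univ.erase i, π j s (a j)) * (u s a + δ * ∑ s', P s a s' * V s')
    else 0

/-- Discounted state visitation distribution `d_μ^π`. -/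
noncomputable def dvisit [Fintype S] [DecidableEq S] [Fintype I] [DecidableEq I]
    [∀ i, Fintype (A i)]
    (δ : ℝ) (P : S → (∀ i, A i) → S → ℝ) (π : ∀ i, S → A i → ℝ) (μ : S → ℝ) (s : S) : ℝ :=
  (1 - δ) * ∑' k : ℕ, δ ^ k * ∑ s0, μ s0 * ((Matrix.of (transMat P π)) ^ k) s0 s

/-- Negative entropy `ν(p) = ∑ p log p` (with the convention `0 log 0 = 0`,
which holds automatically since `Real.log 0 = 0`). -/
noncomputable def negent {α : Type*} [Fintype α] (p : α → ℝ) : ℝ :=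
  ∑ a, p a * Real.log (p a)

/-- `Ṽ` solves the Bellman equation of the `τ`-smoothed game for player `i`. -/
def IsSmoothedValueFun [Fintype S] [Fintype I] [DecidableEq I] [∀ i, Fintype (A i)]
    (δ τ : ℝ) (P : S → (∀ i, A i) → S → ℝ) (u : S → (∀ i, A i) → ℝ)
    (π : ∀ i, S → A i → ℝ) (i : I) (Vt : S → ℝ) : Prop :=
  ∀ s, Vt s = expPay u π s - τ * negent (π i s) + δ * ∑ s', transMat P π s s' * Vt s'

/-- Smoothed Q-function `Q̃_i(s,a_i;π)`. -/
noncomputable def Qsmooth [Fintype S] [Fintype I] [DecidableEq I] [∀ i, Fintype (A i)]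
    [∀ i, DecidableEq (A i)]
    (δ τ : ℝ) (P : S → (∀ i, A i) → S → ℝ) (u : S → (∀ i, A i) → ℝ)
    (π : ∀ i, S → A i → ℝ) (Vt : S → ℝ) (i : I) (s : S) (ai : A i) : ℝ :=
  ∑ a : ∀ j, A j,
    if a i = ai then
      (∏ j ∈ Finset.univ.erase i, π j s (a j)) *
        (u s a - τ * negent (π i s) + δ * ∑ s', P s a s' * Vt s')
    else 0

/-- Euclidean (ℓ²) norm on `α → ℝ`. -/
noncomputable def l2norm {α : Type*} [Fintype α] (f : α → ℝ) : ℝ :=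
  Real.sqrt (∑ a, f a ^ 2)

/-- Standard inner product on `α → ℝ`. -/
noncomputable def dotp {α : Type*} [Fintype α] (f g : α → ℝ) : ℝ :=
  ∑ a, f a * g a

/-- `y` is the Euclidean orthogonal projection of `x` onto the probability simplex. -/
noncomputable def IsProjSimplex {α : Type*} [Fintype α] (x y : α → ℝ) : Prop :=
  IsProbVec y ∧ ∀ z, IsProbVec z → l2norm (fun a => y a - x a) ≤ l2norm (fun a => z a - x a)

/-- Softmax (smoothed best response) with temperature `τ`. -/
noncomputable def softmax {α : Type*} [Fintype α] (τ : ℝ) (q : α → ℝ) (a : α) : ℝ :=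
  Real.exp (q a / τ) / ∑ a', Real.exp (q a' / τ)

end MarkovGameDefs

/-- Maximum one-stage improvement of the smoothed `Q`-value, `Δ_i(s)`:
the gap between the best entropy-regularized one-stage value and the current one. -/
noncomputable def improveDelta {S I : Type*} {A : I → Type*}
    [Fintype S] [Fintype I] [DecidableEq I] [∀ i, Fintype (A i)] [∀ i, DecidableEq (A i)]
    (δ τ : ℝ) (P : S → (∀ i, A i) → S → ℝ) (u : S → (∀ i, A i) → ℝ)
    (π : ∀ j, S → A j → ℝ) (Vt : S → ℝ) (i : I) (s : S) : ℝ :=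
  (⨆ p : {p : A i → ℝ // IsProbVec p},
      ((∑ ai, p.1 ai * Qsmooth δ τ P u π Vt i s ai) - τ * negent p.1)) -
    ((∑ ai, π i s ai * Qsmooth δ τ P u π Vt i s ai) - τ * negent (π i s))

/-!
A softmax update at one pair `(i, s)` raises the smoothed value of player `i` by at least `Δ_i(s)`
at `s` and never lowers it elsewhere (policy improvement). Since smoothed and true values differ by
at most `e = τ log Ā / (1 - δ)`, the maximal improvement `D` satisfies
`μ̄ D ≤ Φ(μ, π') - Φ(μ, π) + α + e`. By the performance difference identity, a unilateral deviation
gains at most `D / (1 - δ) + e`; telescoping the potential therefore bounds the Nash-regret by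
`X / (μ̄ (1 - δ))`, where `X = α + C_Φ / T + 2 e`. It is also at most `2 C / (1 - δ)`, hence at most
the geometric mean of the two bounds, which is of order `√X`.
-/

namespace IsProbVec

variable {α : Type*} [Fintype α] {p : α → ℝ}

lemma nonempty (hp : IsProbVec p) : Nonempty α := by
  by_contra h
  rw [not_nonempty_iff] at h
  simpa using hp.2

lemma le_one (hp : IsProbVec p) (a : α) : p a ≤ 1 :=
  hp.2 ▸ single_le_sum (fun b _ => hp.1 b) (mem_univ a)

lemma sum_mul_const (hp : IsProbVec p) (c : ℝ) : ∑ a, p a * c = c := by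
  rw [← sum_mul, hp.2, one_mul]

lemma sum_mul_le (hp : IsProbVec p) {f : α → ℝ} {c : ℝ} (hf : ∀ a, f a ≤ c) :
    ∑ a, p a * f a ≤ c :=
  (sum_le_sum fun a _ => mul_le_mul_of_nonneg_left (hf a) (hp.1 a)).trans_eq (hp.sum_mul_const c)

lemma abs_sum_mul_le (hp : IsProbVec p) {f : α → ℝ} {c : ℝ} (hf : ∀ a, |f a| ≤ c) :
    |∑ a, p a * f a| ≤ c := by
  refine abs_le'.2 ⟨hp.sum_mul_le fun a => (abs_le'.1 (hf a)).1, ?_⟩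
  simpa only [mul_neg, sum_neg_distrib] using hp.sum_mul_le fun a => (abs_le'.1 (hf a)).2

end IsProbVec

lemma isProbVec_uniform (α : Type*) [Fintype α] [Nonempty α] :
    IsProbVec fun _ : α => (1 : ℝ) / Fintype.card α :=
  ⟨fun _ => by positivity, by simp⟩

section Discounting

variable {S : Type*} [Fintype S] {δ : ℝ} {M : S → S → ℝ} {f : S → ℝ}

lemma le_div_of_discounted_subsolution (hδ : 0 ≤ δ) (hδ1 : δ < 1) (hM : ∀ s, IsProbVec (M s))
    {c : ℝ} (hf : ∀ s, f s ≤ c + δ * ∑ s', M s s' * f s') (s : S) : f s ≤ c / (1 - δ) := by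
  have : Nonempty S := ⟨s⟩
  obtain ⟨s₀, hs₀⟩ := Finite.exists_max f
  have hmean : δ * ∑ s', M s₀ s' * f s' ≤ δ * f s₀ :=
    mul_le_mul_of_nonneg_left ((hM s₀).sum_mul_le hs₀) hδ
  refine (hs₀ s).trans ((le_div_iff₀ (sub_pos.2 hδ1)).2 ?_)
  linarith [hf s₀]

lemma le_of_discounted_supersolution (hδ : 0 ≤ δ) (hδ1 : δ < 1) (hM : ∀ s, IsProbVec (M s))
    {g : S → ℝ} (hg : ∀ s, 0 ≤ g s) (hf : ∀ s, g s + δ * ∑ s', M s s' * f s' ≤ f s) (s : S) :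
    g s ≤ f s := by
  have hf_nonneg (s : S) : 0 ≤ f s := by
    have h := le_div_of_discounted_subsolution hδ hδ1 hM (f := fun s => -f s) (c := 0)
      (fun s => by simp only [mul_neg, sum_neg_distrib]; linarith [hf s, hg s]) s
    simpa using h
  have hmean : 0 ≤ ∑ s', M s s' * f s' :=
    sum_nonneg fun s' _ => mul_nonneg ((hM s).1 s') (hf_nonneg s')
  exact (le_add_of_nonneg_right (mul_nonneg hδ hmean)).trans (hf s)

end Discounting

section Entropy

variable {α : Type*} [Fintype α] {τ : ℝ} {p q r : α → ℝ}

lemma IsProbVec.negent_nonpos (hp : IsProbVec p) : negent p ≤ 0 :=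
  sum_nonpos fun a _ =>
    mul_nonpos_of_nonneg_of_nonpos (hp.1 a) (Real.log_nonpos (hp.1 a) (hp.le_one a))

lemma IsProbVec.sum_mul_log_le_negent (hp : IsProbVec p) (hr : IsProbVec r)
    (hr_pos : ∀ a, 0 < r a) : ∑ a, p a * Real.log (r a) ≤ negent p := by
  have hterm (a : α) : p a * Real.log (r a) - p a * Real.log (p a) ≤ r a - p a := by
    rcases (hp.1 a).eq_or_lt with hpa | hpa
    · simpa [← hpa] using hr.1 a
    · calc p a * Real.log (r a) - p a * Real.log (p a)
          = p a * Real.log (r a / p a) := by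
            rw [Real.log_div (hr_pos a).ne' hpa.ne', mul_sub]
        _ ≤ p a * (r a / p a - 1) := mul_le_mul_of_nonneg_left
            (Real.log_le_sub_one_of_pos (div_pos (hr_pos a) hpa)) hpa.le
        _ = r a - p a := by field_simp
  have hsum := sum_le_sum fun a (_ : a ∈ univ) => hterm a
  rw [sum_sub_distrib, sum_sub_distrib, hr.2, hp.2, sub_self] at hsum
  exact sub_nonpos.1 hsum

lemma IsProbVec.neg_negent_le_log (hp : IsProbVec p) {n : ℕ} (hn : Fintype.card α ≤ n) :
    -negent p ≤ Real.log n := by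
  have := hp.nonempty
  have h := hp.sum_mul_log_le_negent (isProbVec_uniform α) fun _ => by positivity
  rw [hp.sum_mul_const, one_div, Real.log_inv] at h
  exact (neg_le.1 h).trans
    (Real.log_le_log (mod_cast Fintype.card_pos) (mod_cast hn))

/-- Expected payoff of the mixed action `p` under the action values `q`, regularized by `τ` times
the entropy of `p`. -/
noncomputable def entropicValue (τ : ℝ) (q p : α → ℝ) : ℝ :=
  ∑ a, p a * q a - τ * negent p

variable [Nonempty α]

lemma sum_exp_div_pos (τ : ℝ) (q : α → ℝ) : 0 < ∑ a, Real.exp (q a / τ) :=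
  sum_pos (fun _ _ => Real.exp_pos _) univ_nonempty

lemma softmax_pos (τ : ℝ) (q : α → ℝ) (a : α) : 0 < softmax τ q a :=
  div_pos (Real.exp_pos _) (sum_exp_div_pos τ q)

lemma isProbVec_softmax (τ : ℝ) (q : α → ℝ) : IsProbVec (softmax τ q) :=
  ⟨fun a => (softmax_pos τ q a).le, by
    simp only [softmax, ← sum_div, div_self (sum_exp_div_pos τ q).ne']⟩

lemma eq_mul_log_softmax_add (hτ : τ ≠ 0) (q : α → ℝ) (a : α) :
    q a = τ * (Real.log (softmax τ q a) + Real.log (∑ b, Real.exp (q b / τ))) := by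
  rw [softmax, Real.log_div (Real.exp_ne_zero _) (sum_exp_div_pos τ q).ne', Real.log_exp,
    sub_add_cancel, mul_div_cancel₀ _ hτ]

lemma entropicValue_eq_log_sum_exp_sub (hτ : τ ≠ 0) (hp : IsProbVec p) :
    entropicValue τ q p = τ * Real.log (∑ a, Real.exp (q a / τ)) -
      τ * (negent p - ∑ a, p a * Real.log (softmax τ q a)) := by
  have hpq : ∑ a, p a * q a = τ * ∑ a, p a * Real.log (softmax τ q a) +
      τ * Real.log (∑ a, Real.exp (q a / τ)) := by
    calc ∑ a, p a * q a
        = ∑ a, (τ * (p a * Real.log (softmax τ q a)) +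
            p a * (τ * Real.log (∑ b, Real.exp (q b / τ)))) :=
          sum_congr rfl fun a _ => by rw [eq_mul_log_softmax_add hτ q a]; ring
      _ = _ := by rw [sum_add_distrib, ← mul_sum, hp.sum_mul_const]
  rw [entropicValue, hpq]
  ring

lemma entropicValue_le_entropicValue_softmax (hτ : 0 < τ) (hp : IsProbVec p) :
    entropicValue τ q p ≤ entropicValue τ q (softmax τ q) := by
  have hGibbs := hp.sum_mul_log_le_negent (isProbVec_softmax τ q) (softmax_pos τ q)
  rw [entropicValue_eq_log_sum_exp_sub hτ.ne' hp,
    entropicValue_eq_log_sum_exp_sub hτ.ne' (isProbVec_softmax τ q)]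
  simpa [negent] using mul_nonneg hτ.le (sub_nonneg.2 hGibbs)

lemma iSup_entropicValue (hτ : 0 < τ) (q : α → ℝ) :
    ⨆ p : {p : α → ℝ // IsProbVec p}, entropicValue τ q p.1 =
      entropicValue τ q (softmax τ q) :=
  IsGreatest.csSup_eq ⟨⟨⟨_, isProbVec_softmax τ q⟩, rfl⟩,
    Set.forall_mem_range.2 fun p => entropicValue_le_entropicValue_softmax hτ p.2⟩

end Entropy

section Game

variable {S I : Type*} {A : I → Type*} [Fintype I]

lemma jointDist_update [DecidableEq I] (π : ∀ j, S → A j → ℝ) (i : I) (p : S → A i → ℝ)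
    (s : S) (a : ∀ j, A j) :
    jointDist (Function.update π i p) s a = p s (a i) * ∏ j ∈ univ.erase i, π j s (a j) := by
  rw [jointDist, ← mul_prod_erase _ _ (mem_univ i), Function.update_self]
  exact congrArg _ (prod_congr rfl fun j hj => by rw [Function.update_of_ne (ne_of_mem_erase hj)])

variable [∀ i, Fintype (A i)] {π : ∀ j, S → A j → ℝ}

lemma isPolicy_of_eq_uniform [∀ i, Nonempty (A i)]
    (hπ : ∀ i s ai, π i s ai = 1 / Fintype.card (A i)) : IsPolicy π := fun i s =>
  (funext (hπ i s) : π i s = _) ▸ isProbVec_uniform (A i)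

variable [DecidableEq I] {i : I} {p : S → A i → ℝ}

lemma IsPolicy.update (hπ : IsPolicy π) (hp : ∀ s, IsProbVec (p s)) :
    IsPolicy (Function.update π i p) :=
  (Function.forall_update_iff π fun _ πj => ∀ s, IsProbVec (πj s)).2 ⟨hp, fun j _ => hπ j⟩

lemma IsPolicy.isProbVec_jointDist (hπ : IsPolicy π) (s : S) : IsProbVec (jointDist π s) := by
  refine ⟨fun a => prod_nonneg fun i _ => (hπ i s).1 _, ?_⟩
  simp only [jointDist, ← Fintype.prod_sum, (hπ _ s).2, prod_const_one]

variable [Fintype S] {δ τ C : ℝ} {P : S → (∀ i, A i) → S → ℝ} {u : S → (∀ i, A i) → ℝ}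
  {V W W' : S → ℝ}

lemma IsPolicy.isProbVec_transMat (hπ : IsPolicy π) (hP : IsKernel P) (s : S) :
    IsProbVec (transMat P π s) := by
  have hπs := hπ.isProbVec_jointDist s
  refine ⟨fun s' => sum_nonneg fun a _ => mul_nonneg (hπs.1 a) ((hP s a).1 s'), ?_⟩
  simp only [transMat]
  rw [sum_comm]
  simp only [← mul_sum, (hP s _).2, mul_one, hπs.2]

lemma sum_jointDist_mul_sum (P : S → (∀ i, A i) → S → ℝ) (π : ∀ j, S → A j → ℝ) (W : S → ℝ)
    (s : S) :
    ∑ a, jointDist π s a * ∑ s', P s a s' * W s' = ∑ s', transMat P π s s' * W s' := by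
  simp only [transMat, mul_sum, sum_mul, mul_assoc]
  exact sum_comm

lemma IsValueFun.abs_le_div (hV : IsValueFun δ P u π V) (hδ : 0 ≤ δ) (hδ1 : δ < 1)
    (hP : IsKernel P) (hπ : IsPolicy π) (hu : ∀ s a, |u s a| ≤ C) (s : S) :
    |V s| ≤ C / (1 - δ) := by
  have hpay (s : S) : |expPay u π s| ≤ C := (hπ.isProbVec_jointDist s).abs_sum_mul_le (hu s)
  have hM := hπ.isProbVec_transMat hP
  refine abs_le'.2 ⟨le_div_of_discounted_subsolution hδ hδ1 hM (fun s => ?_) s,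
    le_div_of_discounted_subsolution hδ hδ1 hM (f := fun s => -V s) (fun s => ?_) s⟩
  · linarith [hV s, (abs_le'.1 (hpay s)).1]
  · simp only [mul_neg, sum_neg_distrib]
    linarith [hV s, (abs_le'.1 (hpay s)).2]

lemma IsSmoothedValueFun.sub_isValueFun_eq (hW : IsSmoothedValueFun δ τ P u π i W)
    (hV : IsValueFun δ P u π V) (s : S) :
    W s - V s = τ * -negent (π i s) + δ * ∑ s', transMat P π s s' * (W s' - V s') := by
  simp only [mul_sub, sum_sub_distrib]
  linarith [hW s, hV s]

lemma IsSmoothedValueFun.isValueFun_le (hW : IsSmoothedValueFun δ τ P u π i W)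
    (hV : IsValueFun δ P u π V) (hδ : 0 ≤ δ) (hδ1 : δ < 1) (hτ : 0 ≤ τ) (hP : IsKernel P)
    (hπ : IsPolicy π) (s : S) : V s ≤ W s := by
  refine sub_nonneg.1 (le_of_discounted_supersolution hδ hδ1 (hπ.isProbVec_transMat hP)
    (f := fun s => W s - V s) (g := fun _ => 0) (fun _ => le_rfl) (fun s => ?_) s)
  have hent : 0 ≤ τ * -negent (π i s) := mul_nonneg hτ (neg_nonneg.2 (hπ i s).negent_nonpos)
  linarith [hW.sub_isValueFun_eq hV s]

lemma IsSmoothedValueFun.le_isValueFun_add (hW : IsSmoothedValueFun δ τ P u π i W)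
    (hV : IsValueFun δ P u π V) (hδ : 0 ≤ δ) (hδ1 : δ < 1) (hτ : 0 ≤ τ) (hP : IsKernel P)
    (hπ : IsPolicy π) {n : ℕ} (hn : Fintype.card (A i) ≤ n) (s : S) :
    W s ≤ V s + τ * Real.log n / (1 - δ) := by
  refine sub_le_iff_le_add'.1 (le_div_of_discounted_subsolution hδ hδ1
    (hπ.isProbVec_transMat hP) (f := fun s => W s - V s) (fun s => ?_) s)
  have hent := mul_le_mul_of_nonneg_left ((hπ i s).neg_negent_le_log hn) hτ
  linarith [hW.sub_isValueFun_eq hV s]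

variable [∀ i, DecidableEq (A i)]

lemma sum_mul_Qsmooth_eq_sum_jointDist_update (δ τ : ℝ) (P : S → (∀ i, A i) → S → ℝ)
    (u : S → (∀ i, A i) → ℝ) (π : ∀ j, S → A j → ℝ) (W : S → ℝ) (p : S → A i → ℝ) (s : S) :
    ∑ ai, p s ai * Qsmooth δ τ P u π W i s ai =
      ∑ a, jointDist (Function.update π i p) s a *
        (u s a - τ * negent (π i s) + δ * ∑ s', P s a s' * W s') := by
  simp only [Qsmooth, jointDist_update, mul_sum (s := univ (α := ∀ j, A j)), mul_ite, mul_zero]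
  rw [sum_comm]
  simp only [sum_ite_eq, mem_univ, if_true, mul_assoc]

lemma IsPolicy.sum_mul_Qsmooth (hπ : IsPolicy π) (hp : ∀ s, IsProbVec (p s)) (s : S) :
    ∑ ai, p s ai * Qsmooth δ τ P u π W i s ai =
      expPay u (Function.update π i p) s - τ * negent (π i s) +
        δ * ∑ s', transMat P (Function.update π i p) s s' * W s' := by
  rw [sum_mul_Qsmooth_eq_sum_jointDist_update, ← sum_jointDist_mul_sum, mul_sum]
  simp only [mul_add, mul_sub, sum_add_distrib, sum_sub_distrib, mul_left_comm _ δ]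
  rw [((hπ.update hp).isProbVec_jointDist s).sum_mul_const, expPay]

/-- One-stage gain in entropy-regularized smoothed `Q`-value when player `i` replaces the mixed
action `π i s` by `p`; its maximum over `p` is `improveDelta`. -/
noncomputable def smoothedAdvantage (δ τ : ℝ) (P : S → (∀ i, A i) → S → ℝ)
    (u : S → (∀ i, A i) → ℝ) (π : ∀ j, S → A j → ℝ) (W : S → ℝ) (i : I) (s : S)
    (p : A i → ℝ) : ℝ :=
  entropicValue τ (Qsmooth δ τ P u π W i s) p - entropicValue τ (Qsmooth δ τ P u π W i s) (π i s)

lemma smoothedAdvantage_self (δ τ : ℝ) (P : S → (∀ i, A i) → S → ℝ) (u : S → (∀ i, A i) → ℝ)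
    (π : ∀ j, S → A j → ℝ) (W : S → ℝ) (i : I) (s : S) :
    smoothedAdvantage δ τ P u π W i s (π i s) = 0 :=
  sub_self _

lemma improveDelta_eq_smoothedAdvantage_softmax [Nonempty (A i)] (hτ : 0 < τ) (s : S) :
    improveDelta δ τ P u π W i s =
      smoothedAdvantage δ τ P u π W i s (softmax τ (Qsmooth δ τ P u π W i s)) :=
  congrArg (· - _) (iSup_entropicValue hτ _)

lemma smoothedAdvantage_le_improveDelta (hτ : 0 < τ) {s : S} {p : A i → ℝ} (hp : IsProbVec p) :
    smoothedAdvantage δ τ P u π W i s p ≤ improveDelta δ τ P u π W i s := by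
  have := hp.nonempty
  rw [improveDelta_eq_smoothedAdvantage_softmax hτ]
  exact sub_le_sub_right (entropicValue_le_entropicValue_softmax hτ hp) _

lemma IsPolicy.improveDelta_nonneg (hπ : IsPolicy π) (hτ : 0 < τ) (i : I) (s : S) :
    0 ≤ improveDelta δ τ P u π W i s :=
  smoothedAdvantage_self δ τ P u π W i s ▸ smoothedAdvantage_le_improveDelta hτ (hπ i s)

-- The performance difference identity, in its one-step (Bellman) form.
lemma IsSmoothedValueFun.update_sub_eq (hW : IsSmoothedValueFun δ τ P u π i W)
    (hW' : IsSmoothedValueFun δ τ P u (Function.update π i p) i W') (hπ : IsPolicy π)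
    (hp : ∀ s, IsProbVec (p s)) (s : S) :
    W' s - W s = smoothedAdvantage δ τ P u π W i s (p s) +
      δ * ∑ s', transMat P (Function.update π i p) s s' * (W' s' - W s') := by
  have hself := hπ.sum_mul_Qsmooth (δ := δ) (τ := τ) (P := P) (u := u) (W := W) (hπ i) s
  have hdev := hπ.sum_mul_Qsmooth (δ := δ) (τ := τ) (P := P) (u := u) (W := W) hp s
  have hBellman' := hW' s
  rw [Function.update_eq_self] at hself
  rw [Function.update_self] at hBellman'
  simp only [smoothedAdvantage, entropicValue, hself, hdev, mul_sub, sum_sub_distrib]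
  linarith [hW s]

lemma IsSmoothedValueFun.smoothedAdvantage_le_update_sub (hW : IsSmoothedValueFun δ τ P u π i W)
    (hW' : IsSmoothedValueFun δ τ P u (Function.update π i p) i W') (hδ : 0 ≤ δ) (hδ1 : δ < 1)
    (hP : IsKernel P) (hπ : IsPolicy π) (hp : ∀ s, IsProbVec (p s))
    (hadv : ∀ s, 0 ≤ smoothedAdvantage δ τ P u π W i s (p s)) (s : S) :
    smoothedAdvantage δ τ P u π W i s (p s) ≤ W' s - W s :=
  le_of_discounted_supersolution hδ hδ1 ((hπ.update hp).isProbVec_transMat hP)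
    (f := fun s => W' s - W s) hadv (fun s => (hW.update_sub_eq hW' hπ hp s).ge) s

lemma IsSmoothedValueFun.update_sub_le_div (hW : IsSmoothedValueFun δ τ P u π i W)
    (hW' : IsSmoothedValueFun δ τ P u (Function.update π i p) i W') (hδ : 0 ≤ δ) (hδ1 : δ < 1)
    (hP : IsKernel P) (hπ : IsPolicy π) (hp : ∀ s, IsProbVec (p s)) {D : ℝ}
    (hadv : ∀ s, smoothedAdvantage δ τ P u π W i s (p s) ≤ D) (s : S) :
    W' s - W s ≤ D / (1 - δ) :=
  le_div_of_discounted_subsolution hδ hδ1 ((hπ.update hp).isProbVec_transMat hP)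
    (f := fun s => W' s - W s)
    (fun s => (hW.update_sub_eq hW' hπ hp s).trans_le (by gcongr; exact hadv s)) s

end Game

section Averaging

variable {r : ℕ → ℝ} {T : ℕ}

lemma average_Icc_le {c : ℝ} (hT : 1 ≤ T) (hr : ∀ t, r t ≤ c) :
    1 / (T : ℝ) * ∑ t ∈ Icc 1 T, r t ≤ c := by
  have hT₀ : (0 : ℝ) < T := mod_cast hT
  rw [one_div, inv_mul_le_iff₀ hT₀]
  simpa using sum_le_card_nsmul (Icc 1 T) r c fun t _ => hr t

lemma mul_average_Icc_le_of_le_sub {φ : ℕ → ℝ} {c β B : ℝ} (hT : 1 ≤ T)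
    (hr : ∀ t, c * r t ≤ φ (t + 1) - φ t + β) (hφ : φ (T + 1) - φ 1 ≤ B) :
    c * (1 / (T : ℝ) * ∑ t ∈ Icc 1 T, r t) ≤ B / T + β := by
  have hT₀ : (0 : ℝ) < T := mod_cast hT
  have hsum : c * ∑ t ∈ Icc 1 T, r t ≤ B + T * β :=
    calc c * ∑ t ∈ Icc 1 T, r t
        ≤ ∑ t ∈ Icc 1 T, (φ (t + 1) - φ t + β) := by
          rw [mul_sum]; exact sum_le_sum fun t _ => hr t
      _ = φ (T + 1) - φ 1 + T * β := by
          rw [sum_add_distrib, sum_Icc_sub hT]; simp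
      _ ≤ B + T * β := by gcongr
  calc c * (1 / (T : ℝ) * ∑ t ∈ Icc 1 T, r t)
      = (c * ∑ t ∈ Icc 1 T, r t) / T := by ring
    _ ≤ (B + T * β) / T := by gcongr
    _ = B / T + β := by rw [add_div, mul_div_cancel_left₀ _ hT₀.ne']

end Averaging

section Dynamics

variable {S I : Type*} {A : I → Type*} [DecidableEq I] {V : I → (∀ j, S → A j → ℝ) → S → ℝ}
  {π : ∀ j, S → A j → ℝ} {μ : S → ℝ} {i : I} {p : S → A i → ℝ}

/-- Gain in value of player `i` at the initial distribution `μ` from deviating to the policy `p`.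
The Nash-regret is the time average of its maximum over `i` and `p`. -/
def deviationGain [Fintype S] (μ : S → ℝ) (V : I → (∀ j, S → A j → ℝ) → S → ℝ)
    (π : ∀ j, S → A j → ℝ) (i : I) (p : S → A i → ℝ) : ℝ :=
  ∑ s, μ s * V i (Function.update π i p) s - ∑ s, μ s * V i π s

lemma deviationGain_le_of_forall_sub_le [Fintype S] (hμ : IsProbVec μ) {c : ℝ}
    (h : ∀ s, V i (Function.update π i p) s - V i π s ≤ c) : deviationGain μ V π i p ≤ c := by
  simpa only [deviationGain, mul_sub, sum_sub_distrib] using hμ.sum_mul_le h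

variable [Fintype I] [∀ i, Fintype (A i)] {α : ℝ} {Φ : (∀ j, S → A j → ℝ) → S → ℝ}

/-- `Φ` is an `α`-potential function for the value functions `V`: under a unilateral deviation it
changes by the same amount as the value of the deviating player, up to `α`. -/
def IsAlphaPotential (α : ℝ) (V : I → (∀ j, S → A j → ℝ) → S → ℝ)
    (Φ : (∀ j, S → A j → ℝ) → S → ℝ) : Prop :=
  ∀ (s : S) (i : I) (π : ∀ j, S → A j → ℝ), IsPolicy π →
    ∀ πi' : S → A i → ℝ, (∀ s', IsProbVec (πi' s')) →
      |(Φ (Function.update π i πi') s - Φ π s) -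
        (V i (Function.update π i πi') s - V i π s)| ≤ α

lemma IsAlphaPotential.nonneg (hΦ : IsAlphaPotential α V Φ) (hπ : IsPolicy π) (i : I) (s : S) :
    0 ≤ α :=
  (abs_nonneg _).trans (hΦ s i π hπ (π i) (hπ i))

variable [Fintype S] {δ τ C m : ℝ} {n : ℕ} {P : S → (∀ i, A i) → S → ℝ}
  {u : I → S → (∀ i, A i) → ℝ} {Vt : (∀ j, S → A j → ℝ) → I → S → ℝ} {π' : ∀ j, S → A j → ℝ}

lemma deviationGain_le_two_mul_div (hδ : 0 ≤ δ) (hδ1 : δ < 1) (hP : IsKernel P)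
    (hV : ∀ i π, IsPolicy π → IsValueFun δ P (u i) π (V i π)) (hu : ∀ i s a, |u i s a| ≤ C)
    (hμ : IsProbVec μ) (hπ : IsPolicy π) (hp : ∀ s, IsProbVec (p s)) :
    deviationGain μ V π i p ≤ 2 * C / (1 - δ) := by
  refine deviationGain_le_of_forall_sub_le hμ fun s => ?_
  have hdev := (hV i _ (hπ.update hp)).abs_le_div hδ hδ1 hP (hπ.update hp) (hu i) s
  have hcur := (hV i _ hπ).abs_le_div hδ hδ1 hP hπ (hu i) s
  rw [two_mul, add_div]
  linarith [(abs_le.1 hdev).2, (abs_le.1 hcur).1]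

lemma IsAlphaPotential.smoothed_sub_le (hΦ : IsAlphaPotential α V Φ) (hδ : 0 ≤ δ) (hδ1 : δ < 1)
    (hτ : 0 ≤ τ) (hP : IsKernel P) (hV : ∀ i π, IsPolicy π → IsValueFun δ P (u i) π (V i π))
    (hVt : ∀ π, IsPolicy π → ∀ i, IsSmoothedValueFun δ τ P (u i) π i (Vt π i))
    (hn : Fintype.card (A i) ≤ n) (hπ : IsPolicy π) (hp : ∀ s, IsProbVec (p s)) (s : S) :
    Vt (Function.update π i p) i s - Vt π i s ≤
      Φ (Function.update π i p) s - Φ π s + (α + τ * Real.log n / (1 - δ)) := by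
  have hπ' := hπ.update hp
  have hdev := (hVt _ hπ' i).le_isValueFun_add (hV i _ hπ') hδ hδ1 hτ hP hπ' hn s
  have hcur := (hVt π hπ i).isValueFun_le (hV i _ hπ) hδ hδ1 hτ hP hπ s
  linarith [(abs_le.1 (hΦ s i π hπ p hp)).1]

variable [∀ i, DecidableEq (A i)]

lemma deviationGain_le_div_add (hδ : 0 ≤ δ) (hδ1 : δ < 1) (hτ : 0 < τ) (hP : IsKernel P)
    (hV : ∀ i π, IsPolicy π → IsValueFun δ P (u i) π (V i π))
    (hVt : ∀ π, IsPolicy π → ∀ i, IsSmoothedValueFun δ τ P (u i) π i (Vt π i))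
    (hn : Fintype.card (A i) ≤ n) (hμ : IsProbVec μ) (hπ : IsPolicy π)
    (hp : ∀ s, IsProbVec (p s)) {D : ℝ}
    (hD : ∀ s, improveDelta δ τ P (u i) π (Vt π i) i s ≤ D) :
    deviationGain μ V π i p ≤ D / (1 - δ) + τ * Real.log n / (1 - δ) := by
  refine deviationGain_le_of_forall_sub_le hμ fun s => ?_
  have hπ' := hπ.update hp
  have hsmooth := (hVt π hπ i).update_sub_le_div (hVt _ hπ' i) hδ hδ1 hP hπ hp
    (fun s => (smoothedAdvantage_le_improveDelta hτ (hp s)).trans (hD s)) s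
  have hdev := (hVt _ hπ' i).isValueFun_le (hV i _ hπ') hδ hδ1 hτ.le hP hπ' s
  have hcur := (hVt π hπ i).le_isValueFun_add (hV i _ hπ) hδ hδ1 hτ.le hP hπ hn s
  linarith

lemma IsAlphaPotential.mul_improveDelta_le (hΦ : IsAlphaPotential α V Φ) (hδ : 0 ≤ δ)
    (hδ1 : δ < 1) (hτ : 0 < τ) (hP : IsKernel P)
    (hV : ∀ i π, IsPolicy π → IsValueFun δ P (u i) π (V i π))
    (hVt : ∀ π, IsPolicy π → ∀ i, IsSmoothedValueFun δ τ P (u i) π i (Vt π i))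
    (hn : Fintype.card (A i) ≤ n) (hμ : IsProbVec μ) (hπ : IsPolicy π)
    (hp : ∀ s, IsProbVec (p s)) {s : S} (hps : p s = softmax τ (Qsmooth δ τ P (u i) π (Vt π i) i s))
    (hp_ne : ∀ s' ≠ s, p s' = π i s') :
    μ s * improveDelta δ τ P (u i) π (Vt π i) i s ≤
      ∑ s', μ s' * Φ (Function.update π i p) s' - ∑ s', μ s' * Φ π s' +
        (α + τ * Real.log n / (1 - δ)) := by
  have := (hπ i s).nonempty
  have hadv_eq : smoothedAdvantage δ τ P (u i) π (Vt π i) i s (p s) =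
      improveDelta δ τ P (u i) π (Vt π i) i s := by
    rw [hps, improveDelta_eq_smoothedAdvantage_softmax hτ]
  have hadv_nonneg (s' : S) : 0 ≤ smoothedAdvantage δ τ P (u i) π (Vt π i) i s' (p s') := by
    rcases eq_or_ne s' s with rfl | hs'
    · exact hadv_eq ▸ hπ.improveDelta_nonneg hτ i s'
    · rw [hp_ne s' hs', smoothedAdvantage_self]
  have himprove := (hVt π hπ i).smoothedAdvantage_le_update_sub (hVt _ (hπ.update hp) i) hδ hδ1 hP
    hπ hp hadv_nonneg
  calc μ s * improveDelta δ τ P (u i) π (Vt π i) i s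
      ≤ μ s * (Vt (Function.update π i p) i s - Vt π i s) :=
        mul_le_mul_of_nonneg_left (hadv_eq ▸ himprove s) (hμ.1 s)
    _ ≤ ∑ s', μ s' * (Vt (Function.update π i p) i s' - Vt π i s') :=
        single_le_sum (f := fun s' => μ s' * (Vt (Function.update π i p) i s' - Vt π i s'))
          (fun s' _ => mul_nonneg (hμ.1 s') ((hadv_nonneg s').trans (himprove s'))) (mem_univ s)
    _ ≤ ∑ s', μ s' * (Φ (Function.update π i p) s' - Φ π s' +
          (α + τ * Real.log n / (1 - δ))) :=
        sum_le_sum fun s' _ => mul_le_mul_of_nonneg_left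
          (hΦ.smoothed_sub_le hδ hδ1 hτ.le hP hV hVt hn hπ hp s') (hμ.1 s')
    _ = _ := by simp only [mul_add (μ _) (_ - _), sum_add_distrib, hμ.sum_mul_const, mul_sub,
          sum_sub_distrib]

/-- `π'` arises from `π` by one step of sequential maximum improvement smoothed best response, where
`W i` is the smoothed value function of player `i` under `π`. The choice among the maximizers of
`improveDelta` is free. -/
def IsMaxImprovementStep (δ τ : ℝ) (P : S → (∀ i, A i) → S → ℝ) (u : I → S → (∀ i, A i) → ℝ)
    (W : I → S → ℝ) (π π' : ∀ j, S → A j → ℝ) : Prop :=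
  ((∀ i s, improveDelta δ τ P (u i) π (W i) i s ≤ 0) ∧ π' = π) ∨
    ∃ (i : I) (s : S),
      (∀ j s', improveDelta δ τ P (u j) π (W j) j s' ≤ improveDelta δ τ P (u i) π (W i) i s) ∧
      (∀ ai, π' i s ai = softmax τ (Qsmooth δ τ P (u i) π (W i) i s) ai) ∧
      ∀ j s', ¬(j = i ∧ s' = s) → π' j s' = π j s'

namespace IsMaxImprovementStep

lemma isPolicy {W : I → S → ℝ} (hstep : IsMaxImprovementStep δ τ P u W π π')
    (hπ : IsPolicy π) : IsPolicy π' := by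
  rcases hstep with ⟨-, rfl⟩ | ⟨i, s, -, hsoft, hother⟩
  · exact hπ
  intro j s'
  by_cases hjs : j = i ∧ s' = s
  · obtain ⟨rfl, rfl⟩ := hjs
    have := (hπ j s').nonempty
    exact (funext hsoft : π' j s' = _) ▸ isProbVec_softmax _ _
  · exact hother j s' hjs ▸ hπ j s'

lemma exists_improveDelta_le (hstep : IsMaxImprovementStep δ τ P u (Vt π) π π')
    (hΦ : IsAlphaPotential α V Φ) (hα : 0 ≤ α) (hδ : 0 ≤ δ) (hδ1 : δ < 1) (hτ : 0 < τ)
    (hP : IsKernel P) (hV : ∀ i π, IsPolicy π → IsValueFun δ P (u i) π (V i π))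
    (hVt : ∀ π, IsPolicy π → ∀ i, IsSmoothedValueFun δ τ P (u i) π i (Vt π i))
    (hn : ∀ i, Fintype.card (A i) ≤ n) (hμ : IsProbVec μ) (hm : ∀ s, m ≤ μ s)
    (hπ : IsPolicy π) :
    ∃ D, (∀ i s, improveDelta δ τ P (u i) π (Vt π i) i s ≤ D) ∧
      m * D ≤ ∑ s, μ s * Φ π' s - ∑ s, μ s * Φ π s + (α + τ * Real.log n / (1 - δ)) := by
  have hπ' := hstep.isPolicy hπ
  rcases hstep with ⟨hD, rfl⟩ | ⟨i, s, hD, hsoft, hother⟩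
  · refine ⟨0, hD, ?_⟩
    rw [mul_zero, sub_self, zero_add]
    exact add_nonneg hα (div_nonneg (mul_nonneg hτ.le (Real.log_natCast_nonneg n))
      (sub_nonneg.2 hδ1.le))
  · refine ⟨_, hD, ?_⟩
    have hupdate : π' = Function.update π i (π' i) :=
      Function.eq_update_iff.2 ⟨rfl, fun j hj => funext fun s' => hother j s' fun h => hj h.1⟩
    have hincrease := hΦ.mul_improveDelta_le hδ hδ1 hτ hP hV hVt (hn i) hμ hπ (hπ' i)
      (funext hsoft) fun s' hs' => hother i s' fun h => hs' h.2
    rw [← hupdate] at hincrease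
    exact (mul_le_mul_of_nonneg_right (hm s) (hπ.improveDelta_nonneg hτ i s)).trans hincrease

lemma mul_deviationGain_le (hstep : IsMaxImprovementStep δ τ P u (Vt π) π π')
    (hΦ : IsAlphaPotential α V Φ) (hδ : 0 ≤ δ) (hδ1 : δ < 1) (hτ : 0 < τ)
    (hP : IsKernel P) (hV : ∀ i π, IsPolicy π → IsValueFun δ P (u i) π (V i π))
    (hVt : ∀ π, IsPolicy π → ∀ i, IsSmoothedValueFun δ τ P (u i) π i (Vt π i))
    (hn : ∀ i, Fintype.card (A i) ≤ n) (hμ : IsProbVec μ) (hm₀ : 0 ≤ m) (hm : ∀ s, m ≤ μ s)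
    (hπ : IsPolicy π) (hp : ∀ s, IsProbVec (p s)) :
    m * (1 - δ) * deviationGain μ V π i p ≤
      ∑ s, μ s * Φ π' s - ∑ s, μ s * Φ π s + (α + 2 * (τ * Real.log n / (1 - δ))) := by
  obtain ⟨s⟩ := hμ.nonempty
  obtain ⟨D, hD, hincrease⟩ := hstep.exists_improveDelta_le hΦ (hΦ.nonneg hπ i s) hδ hδ1 hτ hP hV
    hVt hn hμ hm hπ
  have hgain := deviationGain_le_div_add hδ hδ1 hτ hP hV hVt (hn i) hμ hπ hp (hD i)
  set e := τ * Real.log n / (1 - δ)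
  have hδ' : 0 < 1 - δ := sub_pos.2 hδ1
  have he₀ : 0 ≤ e := div_nonneg (mul_nonneg hτ.le (Real.log_natCast_nonneg n)) hδ'.le
  have hc : m * (1 - δ) ≤ 1 :=
    mul_le_one₀ ((hm s).trans (hμ.le_one s)) hδ'.le (sub_le_self 1 hδ)
  calc m * (1 - δ) * deviationGain μ V π i p
      ≤ m * (1 - δ) * (D / (1 - δ) + e) := by gcongr
    _ = m * D + m * (1 - δ) * e := by field_simp
    _ ≤ m * D + e := by gcongr; exact mul_le_of_le_one_left he₀ hc
    _ ≤ _ := by linarith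

end IsMaxImprovementStep

end Dynamics

lemma le_sqrt_mul_of_le_of_le {x a b : ℝ} (ha : x ≤ a) (hb : x ≤ b) : x ≤ √(a * b) := by
  rcases le_total x 0 with hx | hx
  · exact hx.trans (Real.sqrt_nonneg _)
  · exact Real.le_sqrt_of_sq_le (sq x ▸ mul_le_mul ha hb hx (hx.trans ha))

theorem sequential_max_improvement_smoothed_br_nash_regret_general
    {S I : Type*} [Fintype S] [Fintype I] [DecidableEq I]
    {A : I → Type*} [∀ i, Fintype (A i)] [∀ i, DecidableEq (A i)]
    {δ τ α C m CΦ : ℝ} {n T : ℕ} {P : S → (∀ i, A i) → S → ℝ} {u : I → S → (∀ i, A i) → ℝ}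
    {V : I → (∀ j, S → A j → ℝ) → S → ℝ} {Φ : (∀ j, S → A j → ℝ) → S → ℝ}
    {Vt : (∀ j, S → A j → ℝ) → I → S → ℝ} {μ : S → ℝ} {πseq : ℕ → ∀ j, S → A j → ℝ}
    (hδ : 0 ≤ δ) (hδ1 : δ < 1) (hτ : 0 < τ) (hT : 1 ≤ T) (hP : IsKernel P)
    (hV : ∀ i π, IsPolicy π → IsValueFun δ P (u i) π (V i π))
    (hVt : ∀ π, IsPolicy π → ∀ i, IsSmoothedValueFun δ τ P (u i) π i (Vt π i))
    (hΦ : IsAlphaPotential α V Φ) (hn : ∀ i, Fintype.card (A i) ≤ n)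
    (hu : ∀ i s a, |u i s a| ≤ C) (hμ : IsProbVec μ) (hm₀ : 0 < m) (hm : ∀ s, m ≤ μ s)
    (hCΦ : ∀ π π', IsPolicy π → IsPolicy π' → |∑ s, μ s * Φ π s - ∑ s, μ s * Φ π' s| ≤ CΦ)
    (hinit : IsPolicy (πseq 0))
    (hstep : ∀ t, IsMaxImprovementStep δ τ P u (Vt (πseq t)) (πseq t) (πseq (t + 1)))
    (isel : ℕ → I) (devsel : ∀ t, S → A (isel t) → ℝ) (hdev : ∀ t s, IsProbVec (devsel t s)) :
    1 / (T : ℝ) * ∑ t ∈ Icc 1 T, deviationGain μ V (πseq t) (isel t) (devsel t) ≤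
      √(2 * C * (α + CΦ / T + 2 * (τ * Real.log n / (1 - δ))) / m) / (1 - δ) := by
  have hδ' : 0 < 1 - δ := sub_pos.2 hδ1
  have hpolicy (t : ℕ) : IsPolicy (πseq t) := by
    induction t with
    | zero => exact hinit
    | succ t ih => exact (hstep t).isPolicy ih
  have hpayoff := average_Icc_le hT fun t =>
    deviationGain_le_two_mul_div hδ hδ1 hP hV hu hμ (hpolicy t) (hdev t)
  have hpotential := mul_average_Icc_le_of_le_sub (φ := fun t => ∑ s, μ s * Φ (πseq t) s) hT
    (fun t => (hstep t).mul_deviationGain_le hΦ hδ hδ1 hτ hP hV hVt hn hμ hm₀.le hm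
      (hpolicy t) (hdev t))
    (le_of_abs_le (hCΦ _ _ (hpolicy (T + 1)) (hpolicy 1)))
  rw [← le_div_iff₀' (mul_pos hm₀ hδ')] at hpotential
  refine (le_sqrt_mul_of_le_of_le hpayoff hpotential).trans_eq ?_
  rw [← Real.sqrt_sq hδ'.le, ← Real.sqrt_div' _ (sq_nonneg _), Real.sqrt_sq hδ'.le]
  congr 1
  field_simp
  ring

section Constants

variable {δ C a m : ℝ}

lemma sqrt_div_one_sub_le (hδ : 0 ≤ δ) (hδ1 : δ < 1) (hC : 1 ≤ C) (ha : 2 ≤ a) (hm : 0 < m)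
    (X : ℝ) :
    √(2 * C * X / m) / (1 - δ) ≤
      16 * √2 * C * √a * Real.log a / (√m * (1 - δ) ^ ((5 : ℝ) / 2)) * √X := by
  have hδ' : 0 < 1 - δ := sub_pos.2 hδ1
  have hsqrt_a : 1 ≤ √a := Real.one_le_sqrt.2 (by linarith)
  have hlog_a : 1 / 16 ≤ Real.log a := by
    linarith [Real.log_two_gt_d9, Real.log_le_log two_pos ha]
  have hsqrt_C : √C ≤ C := Real.sqrt_le_iff.2 ⟨by linarith, le_self_pow₀ hC two_ne_zero⟩
  have hpow : (1 - δ) ^ ((5 : ℝ) / 2) ≤ 1 - δ :=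
    Real.rpow_le_self_of_le_one hδ'.le (sub_le_self 1 hδ) (by norm_num)
  have hnum : √2 * √C ≤ 16 * √2 * C * √a * Real.log a :=
    calc √2 * √C ≤ √2 * C * 1 := by rw [mul_one]; gcongr
      _ ≤ √2 * C * (16 * (√a * Real.log a)) := by gcongr; nlinarith
      _ = 16 * √2 * C * √a * Real.log a := by ring
  calc √(2 * C * X / m) / (1 - δ)
      = √2 * √C / (√m * (1 - δ)) * √X := by
        rw [Real.sqrt_div' _ hm.le, Real.sqrt_mul (by positivity), Real.sqrt_mul zero_le_two]
        field_simp
    _ ≤ _ := by gcongr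

lemma add_smoothing_error_le {α CΦ L : ℝ} {k T : ℕ} (hδ1 : δ < 1) (hL : 0 ≤ L) (hk : 1 ≤ k) :
    α + CΦ / T + 2 * (1 / (2 * T) * L / (1 - δ)) ≤ α + (CΦ + 2 * k * L / (1 - δ)) / T := by
  have : 0 < 1 - δ := sub_pos.2 hδ1
  have hk' : (1 : ℝ) ≤ 2 * k := by norm_cast; lia
  calc α + CΦ / T + 2 * (1 / (2 * T) * L / (1 - δ))
      = α + (CΦ + 1 * L / (1 - δ)) / T := by ring
    _ ≤ α + (CΦ + 2 * k * L / (1 - δ)) / T := by gcongr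

lemma sqrt_le_regret_terms {X Y J : ℝ} (hXY : X ≤ Y) (hY : 0 ≤ Y) (hJ : 0 ≤ J) :
    √X ≤ √Y + Y ^ ((1 : ℝ) / 4) * (1 + J ^ ((1 : ℝ) / 4)) + √J := by
  have hrest : 0 ≤ Y ^ ((1 : ℝ) / 4) * (1 + J ^ ((1 : ℝ) / 4)) := by positivity
  linarith [Real.sqrt_le_sqrt hXY, Real.sqrt_nonneg J]

lemma regret_bound_le {α CΦ : ℝ} {k T : ℕ} (hδ : 0 ≤ δ) (hδ1 : δ < 1) (hC : 1 ≤ C) (ha : 2 ≤ a)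
    (hm : 0 < m) (hα : 0 ≤ α) (hCΦ : 0 ≤ CΦ) (hk : 1 ≤ k) :
    √(2 * C * (α + CΦ / T + 2 * (1 / (2 * T) * Real.log a / (1 - δ))) / m) / (1 - δ) ≤
      16 * √2 * C * √a * Real.log a / (√m * (1 - δ) ^ ((5 : ℝ) / 2)) *
        (√(α + (CΦ + 2 * k * Real.log a / (1 - δ)) / T) +
          (α + (CΦ + 2 * k * Real.log a / (1 - δ)) / T) ^ ((1 : ℝ) / 4) *
            (1 + ((k : ℝ) / T) ^ ((1 : ℝ) / 4)) + √((k : ℝ) / T)) := by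
  have : 0 < 1 - δ := sub_pos.2 hδ1
  have hlog : 0 ≤ Real.log a := Real.log_nonneg (by linarith)
  refine (sqrt_div_one_sub_le hδ hδ1 hC ha hm _).trans ?_
  gcongr
  exact sqrt_le_regret_terms (add_smoothing_error_le hδ1 hlog hk) (by positivity) (by positivity)

end Constants

/-- **Theorem 2.** Nash-regret bound for the sequential maximum improvement smoothed best
response dynamics in Markov `α`-potential games.  As in Theorem 1, the Nash-regret
`(1/T)·∑_{t=1}^T max_i sup_{π_i'} (V_i(μ,(π_i',π_{-i}^{(t)})) − V_i(μ,π^{(t)}))` is bounded by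
the stated quantity; equivalently (as formalized here), the bound holds for every selection of
a player `isel t` and a deviation policy `devsel t` at each step `t`. -/
theorem sequential_max_improvement_smoothed_br_nash_regret
    {S I : Type*} [Fintype S] [Nonempty S] [DecidableEq S]
    [Fintype I] [Nonempty I] [DecidableEq I]
    {A : I → Type*} [∀ i, Fintype (A i)] [∀ i, Nonempty (A i)] [∀ i, DecidableEq (A i)]
    (δ : ℝ) (hδ : 0 < δ) (hδ1 : δ < 1)
    (P : S → (∀ i, A i) → S → ℝ) (hP : IsKernel P)
    (u : I → S → (∀ i, A i) → ℝ)
    (α : ℝ) (hα : 0 ≤ α)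
    (V : I → (∀ j, S → A j → ℝ) → S → ℝ)
    (hV : ∀ i π, IsPolicy π → IsValueFun δ P (u i) π (V i π))
    (Φ : (∀ j, S → A j → ℝ) → S → ℝ)
    (hpot : ∀ (s : S) (i : I) (π : ∀ j, S → A j → ℝ), IsPolicy π →
      ∀ (πi' : S → A i → ℝ), (∀ s', IsProbVec (πi' s')) →
        |(Φ (Function.update π i πi') s - Φ π s) -
          (V i (Function.update π i πi') s - V i π s)| ≤ α)
    (Abar : ℕ) (hAbar : Abar = Finset.univ.sup' Finset.univ_nonempty
      (fun i : I => Fintype.card (A i)))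
    (hAbar2 : 2 ≤ Abar)
    (C : ℝ) (hC : C = Finset.univ.sup' Finset.univ_nonempty
      (fun x : I × S × (∀ j, A j) => |u x.1 x.2.1 x.2.2|))
    (hC1 : 1 ≤ C)
    (μ : S → ℝ) (hμ : IsProbVec μ)
    (mubar : ℝ) (hmubar : mubar = Finset.univ.inf' Finset.univ_nonempty μ)
    (hmubar_pos : 0 < mubar)
    (hbig : 1 ≤ 8 * C * Real.sqrt Abar / (Real.sqrt mubar * (1 - δ) ^ 2))
    (CΦ : ℝ) (hCΦpos : 0 < CΦ)
    (hCΦ : ∀ π π', IsPolicy π → IsPolicy π' →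
      |(∑ s, μ s * Φ π s) - (∑ s, μ s * Φ π' s)| ≤ CΦ)
    (C' : ℝ) (hC' : C' = CΦ + 2 * (Fintype.card I) * Real.log Abar / (1 - δ))
    (T : ℕ) (hT : 1 ≤ T) :
    ∃ τ : ℝ, 0 < τ ∧ τ < 1 ∧
      -- smoothed value functions for this τ
      ∀ (Vt : (∀ j, S → A j → ℝ) → I → S → ℝ),
        (∀ π, IsPolicy π → ∀ i, IsSmoothedValueFun δ τ P (u i) π i (Vt π i)) →
      -- the sequential maximum improvement smoothed best response iterates
      ∀ (πseq : ℕ → ∀ j, S → A j → ℝ),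
        (∀ (i : I) (s : S) (ai : A i), πseq 0 i s ai = 1 / (Fintype.card (A i))) →
        (∀ t : ℕ,
          ((∀ (i : I) (s : S),
              improveDelta δ τ P (u i) (πseq t) (Vt (πseq t) i) i s ≤ 0) ∧
            πseq (t + 1) = πseq t) ∨
          (¬ (∀ (i : I) (s : S),
              improveDelta δ τ P (u i) (πseq t) (Vt (πseq t) i) i s ≤ 0) ∧
            ∃ (ib : I) (sb : S),
              (∀ (i : I) (s : S),
                improveDelta δ τ P (u i) (πseq t) (Vt (πseq t) i) i s ≤
                  improveDelta δ τ P (u ib) (πseq t) (Vt (πseq t) ib) ib sb) ∧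
              (∀ ai : A ib, πseq (t + 1) ib sb ai =
                softmax τ
                  (fun ai' => Qsmooth δ τ P (u ib) (πseq t) (Vt (πseq t) ib) ib sb ai') ai) ∧
              (∀ (i : I) (s : S), ¬ (i = ib ∧ s = sb) → πseq (t + 1) i s = πseq t i s))) →
      -- conclusion: the Nash-regret bound
      ∀ (isel : ℕ → I) (devsel : ∀ t : ℕ, S → A (isel t) → ℝ),
        (∀ t s, IsProbVec (devsel t s)) →
        (1 / (T : ℝ)) * ∑ t ∈ Finset.Icc 1 T,
            ((∑ s, μ s * V (isel t) (Function.update (πseq t) (isel t) (devsel t)) s) -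
              (∑ s, μ s * V (isel t) (πseq t) s)) ≤
          (16 * Real.sqrt 2 * C * Real.sqrt Abar * Real.log Abar) /
              (Real.sqrt mubar * (1 - δ) ^ ((5:ℝ)/2)) *
            (Real.sqrt (α + C' / T) +
              (α + C' / T) ^ ((1:ℝ)/4) * (1 + ((Fintype.card I : ℝ) / T) ^ ((1:ℝ)/4)) +
              Real.sqrt ((Fintype.card I : ℝ) / T))  := by
  have hT₀ : (1 : ℝ) ≤ T := mod_cast hT
  have hn (i : I) : Fintype.card (A i) ≤ Abar :=
    hAbar ▸ le_sup' (fun i => Fintype.card (A i)) (mem_univ i)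
  have hu (i : I) (s : S) (a : ∀ j, A j) : |u i s a| ≤ C :=
    hC ▸ le_sup' (fun x : I × S × (∀ j, A j) => |u x.1 x.2.1 x.2.2|) (mem_univ (i, s, a))
  have hm (s : S) : mubar ≤ μ s := hmubar ▸ inf'_le μ (mem_univ s)
  refine ⟨1 / (2 * T), by positivity, by rw [div_lt_one] <;> linarith,
    fun Vt hVt πseq hinit hstep isel devsel hdev => ?_⟩
  exact (sequential_max_improvement_smoothed_br_nash_regret_general hδ.le hδ1 (by positivity) hT
    hP hV hVt hpot hn hu hμ hmubar_pos hm hCΦ (isPolicy_of_eq_uniform hinit)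
    (fun t => (hstep t).imp_right And.right) isel devsel hdev).trans
    (hC' ▸ regret_bound_le hδ.le hδ1 hC1 (mod_cast hAbar2) hmubar_pos hα hCΦpos.le
      Fintype.card_pos)
end

section
/- (Variational inequality for a projected gradient step on the simplex.) Let A be a finite nonempty set, let Δ(A) ⊂ ℝ^A denote the probability simplex (vectors with nonnegative entries summing to 1), and let δ ∈ (0,1). Suppose x ∈ Δ(A), q ∈ ℝ^A with ‖q‖₂ ≤ √|A|/(1−δ), and 0 < η ≤ (1−δ)/√|A|. Let y be the Euclidean orthogonal projection of x + η·q onto Δ(A). Then for every z ∈ Δ(A): ⟨z − x, q⟩ ≤ (3/η)·‖y − x‖₂. -/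
open Finset

/-!
Write `p = x + η q`. From `η q = (p - y) + (y - x)` one gets
`η ⟪z - x, q⟫ = ⟪p - y, z - y⟫ + ⟪y - x, z - y⟫ + η ⟪y - x, q⟫`. The first term is nonpositive
because `y` is the projection of `p` onto a convex set containing `z`, and by Cauchy–Schwarz the
other two are at most `(‖z - y‖ + η ‖q‖) ‖y - x‖`, where `‖z - y‖ ≤ 2` on the simplex and
`η ‖q‖ ≤ 1` by the choice of step size.
-/

open scoped RealInnerProductSpace

section InnerProductSpace

variable {E : Type*} [NormedAddCommGroup E] [InnerProductSpace ℝ E] {K : Set E}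

theorem inner_sub_sub_nonpos_of_isMinOn_norm_sub (hK : Convex ℝ K) {p y z : E} (hy : y ∈ K)
    (hmin : IsMinOn (fun w => ‖w - p‖) K y) (hz : z ∈ K) : ⟪p - y, z - y⟫ ≤ 0 := by
  have : Nonempty K := ⟨⟨y, hy⟩⟩
  have norm_eq_iInf : ‖p - y‖ = ⨅ w : K, ‖p - w‖ := by
    refine le_antisymm (le_ciInf fun w => ?_)
      (ciInf_le ⟨0, Set.forall_mem_range.2 fun _ => norm_nonneg _⟩ (⟨y, hy⟩ : K))
    simpa only [norm_sub_rev p] using isMinOn_iff.1 hmin w w.2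
  exact (norm_eq_iInf_iff_real_inner_le_zero hK hy).1 norm_eq_iInf z hz

theorem projected_gradient_step_variational_inequality_general (hK : Convex ℝ K) {x q y z : E}
    {η : ℝ} (hη : 0 < η) (hy : y ∈ K) (hmin : IsMinOn (fun w => ‖w - (x + η • q)‖) K y)
    (hz : z ∈ K) : ⟪z - x, q⟫ ≤ (‖z - y‖ / η + ‖q‖) * ‖y - x‖ := by
  have mul_inner_eq : η * ⟪z - x, q⟫ =
      ⟪x + η • q - y, z - y⟫ + ⟪z - y, y - x⟫ + η * ⟪y - x, q⟫ := by
    rw [← real_inner_smul_right, ← real_inner_smul_right, real_inner_comm (z - y),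
      ← inner_add_right, show x + η • q - y + (y - x) = η • q by abel, ← inner_add_left,
      sub_add_sub_cancel]
  have mul_inner_le : η * ⟪z - x, q⟫ ≤ η * ((‖z - y‖ / η + ‖q‖) * ‖y - x‖) :=
    calc η * ⟪z - x, q⟫
        ≤ 0 + ‖z - y‖ * ‖y - x‖ + η * (‖y - x‖ * ‖q‖) := by
          rw [mul_inner_eq]
          gcongr
          · exact inner_sub_sub_nonpos_of_isMinOn_norm_sub hK hy hmin hz
          · exact real_inner_le_norm _ _
          · exact real_inner_le_norm _ _
      _ = η * ((‖z - y‖ / η + ‖q‖) * ‖y - x‖) := by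
          field_simp
          ring
  exact le_of_mul_le_mul_left mul_inner_le hη

end InnerProductSpace

section Simplex

variable {α : Type*} [Fintype α]

/-- The probability simplex as a subset of Euclidean space: the preimage of `stdSimplex ℝ α`, which
lives in `α → ℝ` and hence carries the sup norm, under the identification of the two spaces. -/
def euclideanSimplex (α : Type*) [Fintype α] : Set (EuclideanSpace ℝ α) :=
  WithLp.ofLp ⁻¹' stdSimplex ℝ α

theorem convex_euclideanSimplex : Convex ℝ (euclideanSimplex α) :=
  (convex_stdSimplex ℝ α).linear_preimage (WithLp.linearEquiv 2 ℝ (α → ℝ)).toLinearMap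

theorem norm_le_one_of_mem_euclideanSimplex {p : EuclideanSpace ℝ α}
    (hp : p ∈ euclideanSimplex α) : ‖p‖ ≤ 1 := by
  rw [← sq_le_one_iff₀ (norm_nonneg p), EuclideanSpace.real_norm_sq_eq]
  calc ∑ a, p a ^ 2 ≤ (∑ a, p a) ^ 2 := sum_sq_le_sq_sum_of_nonneg fun a _ => hp.1 a
    _ = 1 := by rw [hp.2, one_pow]

theorem norm_sub_le_two_of_mem_euclideanSimplex {p r : EuclideanSpace ℝ α}
    (hp : p ∈ euclideanSimplex α) (hr : r ∈ euclideanSimplex α) : ‖p - r‖ ≤ 2 :=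
  calc ‖p - r‖ ≤ ‖p‖ + ‖r‖ := norm_sub_le p r
    _ ≤ 1 + 1 := add_le_add (norm_le_one_of_mem_euclideanSimplex hp)
        (norm_le_one_of_mem_euclideanSimplex hr)
    _ = 2 := one_add_one_eq_two

theorem l2norm_eq_norm_toLp (f : α → ℝ) : l2norm f = ‖WithLp.toLp 2 f‖ := by
  simp [l2norm, EuclideanSpace.norm_eq]

theorem dotp_eq_inner_toLp (f g : α → ℝ) :
    dotp f g = ⟪WithLp.toLp 2 f, WithLp.toLp 2 g⟫ := by
  simp [dotp, PiLp.inner_apply, mul_comm]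

theorem IsProjSimplex.isMinOn_norm_sub {p y : α → ℝ} (hy : IsProjSimplex p y) :
    IsMinOn (fun w => ‖w - WithLp.toLp 2 p‖) (euclideanSimplex α) (WithLp.toLp 2 y) :=
  isMinOn_iff.2 fun w hw => by
    have l2norm_le := hy.2 w.ofLp hw
    rwa [l2norm_eq_norm_toLp, l2norm_eq_norm_toLp] at l2norm_le

theorem IsProjSimplex.dotp_sub_le {x q y z : α → ℝ} {η : ℝ} (hη : 0 < η)
    (hy : IsProjSimplex (fun a => x a + η * q a) y) (hz : IsProbVec z) :
    dotp (fun a => z a - x a) q ≤ (2 / η + l2norm q) * l2norm (fun a => y a - x a) := by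
  rw [dotp_eq_inner_toLp, l2norm_eq_norm_toLp, l2norm_eq_norm_toLp]
  calc ⟪WithLp.toLp 2 z - WithLp.toLp 2 x, WithLp.toLp 2 q⟫
      ≤ (‖WithLp.toLp 2 z - WithLp.toLp 2 y‖ / η + ‖WithLp.toLp 2 q‖) *
          ‖WithLp.toLp 2 y - WithLp.toLp 2 x‖ :=
        projected_gradient_step_variational_inequality_general convex_euclideanSimplex hη hy.1
          hy.isMinOn_norm_sub hz
    _ ≤ (2 / η + ‖WithLp.toLp 2 q‖) * ‖WithLp.toLp 2 y - WithLp.toLp 2 x‖ := by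
        gcongr
        exact norm_sub_le_two_of_mem_euclideanSimplex hz hy.1

end Simplex

/-- **Variational inequality for a projected gradient step on the simplex.** -/
theorem projected_gradient_step_variational_inequality
    {A : Type*} [Fintype A] [Nonempty A]
    (δ : ℝ) (hδ : 0 < δ) (hδ1 : δ < 1)
    (x : A → ℝ) (hx : IsProbVec x)
    (q : A → ℝ) (hq : l2norm q ≤ Real.sqrt (Fintype.card A) / (1 - δ))
    (η : ℝ) (hη : 0 < η) (hη' : η ≤ (1 - δ) / Real.sqrt (Fintype.card A))
    (y : A → ℝ) (hy : IsProjSimplex (fun a => x a + η * q a) y) :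
    ∀ z, IsProbVec z →
      dotp (fun a => z a - x a) q ≤ (3 / η) * l2norm (fun a => y a - x a) := by
  intro z hz
  have l2norm_q_le : l2norm q ≤ 1 / η :=
    calc l2norm q ≤ Real.sqrt (Fintype.card A) / (1 - δ) := hq
      _ = 1 / ((1 - δ) / Real.sqrt (Fintype.card A)) := (one_div_div _ _).symm
      _ ≤ 1 / η := one_div_le_one_div_of_le hη hη'
  calc dotp (fun a => z a - x a) q
      ≤ (2 / η + l2norm q) * l2norm (fun a => y a - x a) := hy.dotp_sub_le hη hz
    _ ≤ (2 / η + 1 / η) * l2norm (fun a => y a - x a) := by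
        gcongr
        exact Real.sqrt_nonneg _
    _ = 3 / η * l2norm (fun a => y a - x a) := by ring
end
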